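/- The bubble satisfies the integration-by-parts identity (cₙ/2)·∫_{ℝⁿ₊} |∇U(x)|² dx = (cₙ(n−2)/4)·H·∫_{ℝ^{n−1}} U(x̃, 0)^{2(n−1)/(n−2)} dx̃ − (1/2)·|K|·∫_{ℝⁿ₊} U(x)^{2n/(n−2)} dx. -/

import Mathlib

open Real MeasureTheory

noncomputable section

/-- `αₙ = (4n(n−1))^((n−2)/4)`. -/
def alphaN (n : ℕ) : ℝ := (4 * (n : ℝ) * ((n : ℝ) - 1)) ^ (((n : ℝ) - 2) / 4)

/-- `cₙ = 4(n−1)/(n−2)`. -/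
def cN (n : ℕ) : ℝ := 4 * ((n : ℝ) - 1) / ((n : ℝ) - 2)

/-- Points of `ℝⁿ = ℝ^{n-1} × ℝ`, written as pairs `(y, xₙ)`. -/
abbrev HalfPt (n : ℕ) := (Fin (n - 1) → ℝ) × ℝ

/-- `|y|² + (xₙ + D)² − 1`. -/
def QD (n : ℕ) (D : ℝ) (x : HalfPt n) : ℝ := (∑ i, (x.1 i) ^ 2) + (x.2 + D) ^ 2 - 1

/-- The standard bubble `U(x) = αₙ |K|^{-(n-2)/4} (|y|² + (xₙ+D)² − 1)^{-(n-2)/2}`. -/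
def bubbleU (n : ℕ) (K D : ℝ) (x : HalfPt n) : ℝ :=
  alphaN n * |K| ^ (-(((n : ℝ) - 2) / 4)) * QD n D x ^ (-(((n : ℝ) - 2) / 2))

/-- Second directional derivative of `f` in the direction `v` at `x`. -/
def dd2 (n : ℕ) (f : HalfPt n → ℝ) (v : HalfPt n) (x : HalfPt n) : ℝ :=
  fderiv ℝ (fun y => fderiv ℝ f y v) x v

/-- Euclidean Laplacian: sum of the second partial derivatives along the coordinate
directions of `ℝ^{n-1} × ℝ`. -/
def lap (n : ℕ) (f : HalfPt n → ℝ) (x : HalfPt n) : ℝ :=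
  (∑ i : Fin (n - 1), dd2 n f (Pi.single i 1, 0) x) + dd2 n f ((0 : Fin (n - 1) → ℝ), 1) x

/-- The bubble family `U_{δ,x₀(δ)}` with `x₀(δ) = (t, −Dδ)`. -/
def bubbleFam (n : ℕ) (K D δ : ℝ) (t : Fin (n - 1) → ℝ) (x : HalfPt n) : ℝ :=
  alphaN n * |K| ^ (-(((n : ℝ) - 2) / 4)) * δ ^ (((n : ℝ) - 2) / 2) *
    ((∑ i, (x.1 i - t i) ^ 2) + (x.2 + D * δ) ^ 2 - δ ^ 2) ^ (-(((n : ℝ) - 2) / 2))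

/-- `𝔧ᵢ`, `i = 1, …, n−1`: the tangential derivatives of the bubble. -/
def jTan (n : ℕ) (K D : ℝ) (i : Fin (n - 1)) (x : HalfPt n) : ℝ :=
  alphaN n * |K| ^ (-(((n : ℝ) - 2) / 4)) * (2 - (n : ℝ)) * x.1 i * QD n D x ^ (-((n : ℝ) / 2))

/-- `𝔧ₙ`. -/
def jNor (n : ℕ) (K D : ℝ) (x : HalfPt n) : ℝ :=
  alphaN n * |K| ^ (-(((n : ℝ) - 2) / 4)) * (((n : ℝ) - 2) / 2) *
    ((∑ i, (x.1 i) ^ 2) + x.2 ^ 2 + 1 - D ^ 2) * QD n D x ^ (-((n : ℝ) / 2))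

/-- All the `𝔧ᵢ`, `i = 1, …, n`, indexed by `Fin n`. -/
def jAll (n : ℕ) (K D : ℝ) (i : Fin n) (x : HalfPt n) : ℝ :=
  if h : (i : ℕ) < n - 1 then jTan n K D ⟨(i : ℕ), h⟩ x else jNor n K D x

/-- `I^n_{n-1} = ∫₀^∞ ρⁿ (1+ρ²)^{-(n-1)} dρ`. -/
def Iconst (n : ℕ) : ℝ := ∫ ρ in Set.Ioi (0 : ℝ), ρ ^ n / (1 + ρ ^ 2) ^ (n - 1)

/-- `ω_{n-1}`: the `(n−2)`-dimensional Hausdorff measure of the unit sphere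
`S^{n-2} ⊆ ℝ^{n-1}`. -/
def omegaN (n : ℕ) : ℝ :=
  (μH[(n : ℝ) - 2] (Metric.sphere (0 : EuclideanSpace ℝ (Fin (n - 1))) 1)).toReal

/-- `φ_m(D) = ∫_D^∞ (t²−1)^{−m} dt`. -/
def phiFun (m D : ℝ) : ℝ := ∫ t in Set.Ioi D, (t ^ 2 - 1) ^ (-m)

/-- `|∇f(x)|²`, the squared Euclidean norm of the gradient. -/
def gradSq (n : ℕ) (f : HalfPt n → ℝ) (x : HalfPt n) : ℝ :=
  (∑ i : Fin (n - 1), (fderiv ℝ f x (Pi.single i 1, (0 : ℝ))) ^ 2) +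
    (fderiv ℝ f x ((0 : Fin (n - 1) → ℝ), 1)) ^ 2

/-- The energy of the bubble. -/
def energyE (n : ℕ) (K H D : ℝ) : ℝ :=
  cN n / 2 * (∫ x in {x : HalfPt n | 0 < x.2}, gradSq n (bubbleU n K D) x) +
    ((n : ℝ) - 2) / (2 * (n : ℝ)) * |K| *
      (∫ x in {x : HalfPt n | 0 < x.2}, bubbleU n K D x ^ (2 * (n : ℝ) / ((n : ℝ) - 2))) -
    ((n : ℝ) - 2) * H *
      (∫ y : Fin (n - 1) → ℝ, bubbleU n K D (y, 0) ^ (2 * ((n : ℝ) - 1) / ((n : ℝ) - 2)))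

/-- The Euclidean norm `|x|` on `ℝ^{n-1} × ℝ`. -/
def enormE (n : ℕ) (x : HalfPt n) : ℝ := Real.sqrt ((∑ i, (x.1 i) ^ 2) + x.2 ^ 2)

/-- The source term `E_h`. -/
def Ehsrc (n : ℕ) (K D : ℝ) (h : Fin (n - 1) → Fin (n - 1) → ℝ) (x : HalfPt n) : ℝ :=
  (8 * ((n : ℝ) - 1) / ((n : ℝ) - 2)) *
    (∑ i : Fin (n - 1), ∑ j : Fin (n - 1),
      h i j *
        fderiv ℝ (fun y => fderiv ℝ (bubbleU n K D) y (Pi.single j 1, (0 : ℝ))) x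
          (Pi.single i 1, (0 : ℝ))) * x.2

/-!
Write `q = |y|² + (t + D)² - 1`, so that `U` is a constant multiple of `q ^ (-(n - 2) / 2)`. Then
`|∇U|²` is a multiple of `q ^ (-(n - 1)) + q ^ (-n)`, `U ^ (2n / (n - 2))` of `q ^ (-n)`, and
`U ^ (2(n - 1) / (n - 2))` of `q ^ (-(n - 1))`. The divergence theorem for the field
`q ^ (-(n - 1)) • (y, t + D)`, whose divergence is `-(n - 2) q ^ (-(n - 1)) - 2(n - 1) q ^ (-n)` and
whose last component at `t = 0` is `D q ^ (-(n - 1))`, relates the three integrals.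
-/

open Filter Topology

section HalfSpaceDivergence

variable {E F : Type*} [MeasurableSpace E] [NormedAddCommGroup F] [NormedSpace ℝ F]
  {μ : Measure E}

theorem measurableSet_halfSpace : MeasurableSet {x : E × ℝ | 0 < x.2} :=
  measurableSet_lt measurable_const measurable_snd

theorem prod_restrict_halfSpace [SFinite μ] :
    (μ.prod volume).restrict {x : E × ℝ | 0 < x.2} = μ.prod (volume.restrict (Set.Ioi 0)) := by
  have hset : {x : E × ℝ | 0 < x.2} = Set.univ ×ˢ Set.Ioi 0 := by ext; simp
  rw [hset, ← Measure.prod_restrict, Measure.restrict_univ]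

theorem integral_eq_zero_of_hasLineDerivAt [NormedAddCommGroup E] [NormedSpace ℝ E]
    [FiniteDimensional ℝ E] [BorelSpace E] [μ.IsAddHaarMeasure] {f f' : E → F} {v : E}
    (hf : Integrable f μ) (hf' : Integrable f' μ)
    (hff' : ∀ x, HasLineDerivAt ℝ f (f' x) x v) : ∫ x, f' x ∂μ = 0 := by
  have hone (x : E) : HasLineDerivAt ℝ (fun _ : E => (1 : ℝ)) 0 x v := hasDerivAt_const _ _
  simpa using integral_bilinear_hasLineDerivAt_right_eq_neg_left_of_integrable
    (B := ContinuousLinearMap.lsmul ℝ ℝ) (f := fun _ => (1 : ℝ)) (f' := fun _ => 0)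
    (by simp) (by simpa using hf') (by simpa using hf) (fun x _ => hone x) (fun x _ => hff' x)

theorem integral_halfSpace_tangential_deriv [NormedAddCommGroup E] [NormedSpace ℝ E]
    [FiniteDimensional ℝ E] [BorelSpace E] [μ.IsAddHaarMeasure] {f f' : E × ℝ → F} {v : E}
    (hf : ∀ t, 0 < t → Integrable (fun y => f (y, t)) μ)
    (hf' : IntegrableOn f' {x | 0 < x.2} (μ.prod volume))
    (hff' : ∀ x, 0 < x.2 → HasLineDerivAt ℝ f (f' x) x (v, 0)) :
    ∫ x in {x | 0 < x.2}, f' x ∂μ.prod volume = 0 := by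
  rw [IntegrableOn, prod_restrict_halfSpace] at hf'
  rw [prod_restrict_halfSpace, integral_prod_symm _ hf']
  refine integral_eq_zero_of_ae ?_
  filter_upwards [hf'.prod_left_ae, ae_restrict_mem measurableSet_Ioi] with t hslice ht
  exact integral_eq_zero_of_hasLineDerivAt (hf t ht) hslice fun y => by
    simpa [HasLineDerivAt] using hff' (y, t) ht

theorem integral_halfSpace_normal_deriv [AddCommGroup E] [Module ℝ E] [CompleteSpace F] [SFinite μ]
    {f f' : E × ℝ → F}
    (hf : ∀ y, Tendsto (fun t => f (y, t)) atTop (𝓝 0))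
    (hf' : IntegrableOn f' {x | 0 < x.2} (μ.prod volume))
    (hff' : ∀ x, 0 ≤ x.2 → HasLineDerivAt ℝ f (f' x) x (0, 1)) :
    ∫ x in {x | 0 < x.2}, f' x ∂μ.prod volume = -∫ y, f (y, 0) ∂μ := by
  rw [IntegrableOn, prod_restrict_halfSpace] at hf'
  rw [prod_restrict_halfSpace, integral_prod _ hf', ← integral_neg]
  refine integral_congr_ae ?_
  filter_upwards [hf'.prod_right_ae] with y hslice
  have hderiv : ∀ t ∈ Set.Ici (0 : ℝ), HasDerivAt (fun t => f (y, t)) (f' (y, t)) t := by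
    intro t ht
    have hline : HasDerivAt (fun s => f (y, t + s)) (f' (y, t)) 0 := by
      simpa [HasLineDerivAt] using hff' (y, t) ht
    simpa using HasDerivAt.comp_add_const (f := fun s => f (y, t + s)) t (-t)
      (by simpa using hline)
  simpa using integral_Ioi_of_hasDerivAt_of_tendsto' hderiv hslice (hf y)

theorem integral_halfSpace_divergence {ι : Type*} [Fintype ι] [DecidableEq ι] [CompleteSpace F]
    {f f' : ι → (ι → ℝ) × ℝ → F} {g g' : (ι → ℝ) × ℝ → F}
    (hf : ∀ i t, 0 < t → Integrable fun y => f i (y, t))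
    (hf' : ∀ i, IntegrableOn (f' i) {x | 0 < x.2})
    (hff' : ∀ i x, 0 < x.2 → HasLineDerivAt ℝ (f i) (f' i x) x (Pi.single i 1, 0))
    (hg : ∀ y, Tendsto (fun t => g (y, t)) atTop (𝓝 0))
    (hg' : IntegrableOn g' {x | 0 < x.2})
    (hgg' : ∀ x, 0 ≤ x.2 → HasLineDerivAt ℝ g (g' x) x (0, 1)) :
    ∫ x in {x | 0 < x.2}, (∑ i, f' i x + g' x) = -∫ y, g (y, 0) := by
  have hf'_sum : IntegrableOn (fun x => ∑ i, f' i x) {x | 0 < x.2} :=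
    integrable_finsetSum _ fun i _ => hf' i
  have htangential (i : ι) : ∫ x in {x | 0 < x.2}, f' i x = 0 :=
    integral_halfSpace_tangential_deriv (hf i) (hf' i) (hff' i)
  rw [integral_add hf'_sum hg', integral_finsetSum _ fun i _ => hf' i,
    Finset.sum_eq_zero fun i _ => htangential i, zero_add]
  exact integral_halfSpace_normal_deriv hg hg' hgg'

end HalfSpaceDivergence

section PowerFields

theorem integrableOn_rpow_neg_of_le {E : Type*} [NormedAddCommGroup E] [NormedSpace ℝ E]
    [FiniteDimensional ℝ E] [MeasurableSpace E] [BorelSpace E] {μ : Measure E}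
    [μ.IsAddHaarMeasure] {S : Set E} {q : E → ℝ} {k s : ℝ} (hS : MeasurableSet S)
    (hq : Measurable q) (hk : 0 < k) (hqS : ∀ x ∈ S, k * (1 + ‖x‖ ^ 2) ≤ q x)
    (hs : (Module.finrank ℝ E : ℝ) < 2 * s) :
    IntegrableOn (fun x => q x ^ (-s)) S μ := by
  have hs0 : 0 < s := by linarith [(Module.finrank ℝ E).cast_nonneg (α := ℝ)]
  refine Integrable.mono'
    ((integrable_rpow_neg_one_add_norm_sq (μ := μ) hs).const_mul (k ^ (-s))).integrableOn
    (hq.pow_const _).aestronglyMeasurable ?_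
  filter_upwards [ae_restrict_mem hS] with x hx
  have hqx : 0 < q x := lt_of_lt_of_le (by positivity) (hqS x hx)
  calc ‖q x ^ (-s)‖ = q x ^ (-s) := norm_of_nonneg (by positivity)
    _ ≤ (k * (1 + ‖x‖ ^ 2)) ^ (-s) :=
      rpow_le_rpow_of_nonpos (by positivity) (hqS x hx) (neg_nonpos.2 hs0.le)
    _ = k ^ (-s) * (1 + ‖x‖ ^ 2) ^ (-(2 * s) / 2) := by
      rw [mul_rpow hk.le (by positivity)]
      ring_nf

theorem abs_mul_rpow_neg_le {z q C s : ℝ} (hq : 0 < q) (hz : z ^ 2 ≤ C * q) :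
    |z * q ^ (-s)| ≤ √C * q ^ (-(s - 1 / 2)) := by
  calc |z * q ^ (-s)| = |z| * q ^ (-s) := by rw [abs_mul, abs_of_nonneg (rpow_nonneg hq.le _)]
    _ ≤ √C * √q * q ^ (-s) := by
      gcongr
      rw [← sqrt_mul' _ hq.le]
      exact abs_le_sqrt hz
    _ = √C * q ^ (-(s - 1 / 2)) := by
      rw [sqrt_eq_rpow q, mul_assoc, ← rpow_add hq]
      ring_nf

theorem sq_mul_rpow_neg_le {z q C s : ℝ} (hq : 0 < q) (hz : z ^ 2 ≤ C * q) :
    z ^ 2 * q ^ (-(s + 1)) ≤ C * q ^ (-s) := by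
  calc z ^ 2 * q ^ (-(s + 1)) ≤ C * q * q ^ (-(s + 1)) := by gcongr
    _ = C * q ^ (-s) := by
      rw [mul_assoc, neg_add', rpow_sub_one hq.ne', mul_div_cancel₀ _ hq.ne']

theorem tendsto_mul_rpow_neg_zero {α : Type*} {l : Filter α} {z q : α → ℝ} {C s : ℝ}
    (hs : 1 < 2 * s) (hq : Tendsto q l atTop) (hz : ∀ᶠ x in l, z x ^ 2 ≤ C * q x) :
    Tendsto (fun x => z x * q x ^ (-s)) l (𝓝 0) := by
  have hbound : Tendsto (fun x => √C * q x ^ (-(s - 1 / 2))) l (𝓝 0) := by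
    simpa using ((tendsto_rpow_neg_atTop (y := s - 1 / 2) (by linarith)).comp hq).const_mul √C
  refine squeeze_zero_norm' ?_ hbound
  filter_upwards [hz, hq.eventually_gt_atTop 0] with x hzx hqx
  exact abs_mul_rpow_neg_le hqx hzx

section Integrable

variable {α : Type*} [MeasurableSpace α] {μ : Measure α} {z q : α → ℝ} {C s : ℝ}

theorem integrable_mul_rpow_neg (hzm : Measurable z) (hqm : Measurable q)
    (hq : ∀ᵐ x ∂μ, 0 < q x) (hz : ∀ᵐ x ∂μ, z x ^ 2 ≤ C * q x)
    (hint : Integrable (fun x => q x ^ (-(s - 1 / 2))) μ) :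
    Integrable (fun x => z x * q x ^ (-s)) μ := by
  refine Integrable.mono' (hint.const_mul √C) (Measurable.aestronglyMeasurable (by fun_prop)) ?_
  filter_upwards [hq, hz] with x hqx hzx
  exact abs_mul_rpow_neg_le hqx hzx

theorem integrable_rpow_neg_sub_sq_mul_rpow_neg (hzm : Measurable z) (hqm : Measurable q)
    (hq : ∀ᵐ x ∂μ, 0 < q x) (hz : ∀ᵐ x ∂μ, z x ^ 2 ≤ C * q x)
    (hint : Integrable (fun x => q x ^ (-s)) μ) :
    Integrable (fun x => q x ^ (-s) - 2 * s * (z x ^ 2 * q x ^ (-(s + 1)))) μ := by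
  refine hint.sub (Integrable.const_mul ?_ _)
  refine Integrable.mono' (hint.const_mul C)
    (Measurable.aestronglyMeasurable (by fun_prop)) ?_
  filter_upwards [hq, hz] with x hqx hzx
  rw [norm_of_nonneg (by positivity)]
  exact sq_mul_rpow_neg_le hqx hzx

end Integrable

theorem hasLineDerivAt_mul_rpow_neg {E : Type*} [AddCommGroup E] [Module ℝ E] {z q : E → ℝ}
    {x v : E} {s : ℝ} (hz : HasLineDerivAt ℝ z 1 x v) (hq : HasLineDerivAt ℝ q (2 * z x) x v)
    (hqx : q x ≠ 0) :
    HasLineDerivAt ℝ (fun x => z x * q x ^ (-s))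
      (q x ^ (-s) - 2 * s * (z x ^ 2 * q x ^ (-(s + 1)))) x v := by
  unfold HasLineDerivAt at hz hq ⊢
  refine (hz.mul (hq.rpow_const (p := -s) (Or.inl (by simpa using hqx)))).congr_deriv ?_
  simp only [zero_smul, add_zero, neg_add']
  ring

theorem hasLineDerivAt_fst_apply_single {ι : Type*} [DecidableEq ι] (x : (ι → ℝ) × ℝ) (i : ι) :
    HasLineDerivAt ℝ (fun x : (ι → ℝ) × ℝ => x.1 i) 1 x (Pi.single i 1, 0) := by
  simpa [HasLineDerivAt] using (hasDerivAt_id 0).const_add (x.1 i)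

theorem hasLineDerivAt_snd_add_const {E : Type*} [AddCommGroup E] [Module ℝ E] (x : E × ℝ)
    (D : ℝ) : HasLineDerivAt ℝ (fun x : E × ℝ => x.2 + D) 1 x (0, 1) := by
  simpa [HasLineDerivAt] using ((hasDerivAt_id 0).const_add x.2).add_const D

end PowerFields

section ShiftedQuadric

variable {ι : Type*} [Fintype ι] {D c s : ℝ}

/-- The quadric `|y|² + (t + D)² - c` on `ℝ^ι × ℝ`. It is positive on the closed upper half-space
when `0 ≤ D` and `c < D²`; the base `QD n D` of the bubble is the case `c = 1`. -/
def shiftedQuadric (D c : ℝ) (x : (ι → ℝ) × ℝ) : ℝ := ∑ i, x.1 i ^ 2 + (x.2 + D) ^ 2 - c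

theorem measurable_shiftedQuadric : Measurable (shiftedQuadric (ι := ι) D c) := by
  unfold shiftedQuadric
  fun_prop

theorem norm_sq_le_sum_sq (y : ι → ℝ) : ‖y‖ ^ 2 ≤ ∑ i, y i ^ 2 := by
  have hsum : 0 ≤ ∑ i, y i ^ 2 := Finset.sum_nonneg fun i _ => sq_nonneg _
  rw [← le_sqrt (norm_nonneg _) hsum, pi_norm_le_iff_of_nonneg (sqrt_nonneg _)]
  exact fun i => abs_le_sqrt <|
    Finset.single_le_sum (f := fun i => y i ^ 2) (fun i _ => sq_nonneg _) (Finset.mem_univ i)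

theorem norm_sq_le_sum_sq_add_sq (x : (ι → ℝ) × ℝ) : ‖x‖ ^ 2 ≤ ∑ i, x.1 i ^ 2 + x.2 ^ 2 := by
  have hsum := norm_sq_le_sum_sq x.1
  have hsnd : ‖x.2‖ ^ 2 = x.2 ^ 2 := sq_abs _
  rcases max_choice ‖x.1‖ ‖x.2‖ with h | h <;> rw [Prod.norm_def, h] <;>
    nlinarith [sq_nonneg ‖x.1‖, sq_nonneg x.2]

theorem le_shiftedQuadric (hD : 0 ≤ D) {x : (ι → ℝ) × ℝ} (hx : 0 ≤ x.2) :
    D ^ 2 - c + ‖x‖ ^ 2 ≤ shiftedQuadric D c x := by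
  have hnorm := norm_sq_le_sum_sq_add_sq x
  unfold shiftedQuadric
  nlinarith [mul_nonneg hD hx]

theorem shiftedQuadric_pos (hD : 0 ≤ D) (hc : c < D ^ 2) {x : (ι → ℝ) × ℝ} (hx : 0 ≤ x.2) :
    0 < shiftedQuadric D c x := by
  linarith [le_shiftedQuadric (c := c) hD hx, sq_nonneg ‖x‖]

theorem min_mul_le_shiftedQuadric (hD : 0 ≤ D) {x : (ι → ℝ) × ℝ} (hx : 0 ≤ x.2) :
    min 1 (D ^ 2 - c) * (1 + ‖x‖ ^ 2) ≤ shiftedQuadric D c x := by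
  have hnorm : min 1 (D ^ 2 - c) * ‖x‖ ^ 2 ≤ 1 * ‖x‖ ^ 2 := by
    gcongr
    exact min_le_left _ _
  linarith [le_shiftedQuadric (c := c) hD hx, min_le_right 1 (D ^ 2 - c)]

theorem sum_sq_add_sq_le_mul_shiftedQuadric (hD : 0 ≤ D) (hc : c < D ^ 2) {x : (ι → ℝ) × ℝ}
    (hx : 0 ≤ x.2) :
    ∑ i, x.1 i ^ 2 + (x.2 + D) ^ 2 ≤ (1 + |c| / (D ^ 2 - c)) * shiftedQuadric D c x := by
  have hgap : 0 < D ^ 2 - c := sub_pos.2 hc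
  have hlower : D ^ 2 - c ≤ shiftedQuadric D c x := by
    linarith [le_shiftedQuadric (c := c) hD hx, sq_nonneg ‖x‖]
  calc ∑ i, x.1 i ^ 2 + (x.2 + D) ^ 2 = shiftedQuadric D c x + c := by
        rw [shiftedQuadric, sub_add_cancel]
    _ ≤ shiftedQuadric D c x + |c| / (D ^ 2 - c) * (D ^ 2 - c) := by
      rw [div_mul_cancel₀ _ hgap.ne']
      gcongr
      exact le_abs_self c
    _ ≤ shiftedQuadric D c x + |c| / (D ^ 2 - c) * shiftedQuadric D c x := by gcongr
    _ = (1 + |c| / (D ^ 2 - c)) * shiftedQuadric D c x := by ring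

theorem sq_fst_le_mul_shiftedQuadric (hD : 0 ≤ D) (hc : c < D ^ 2) {x : (ι → ℝ) × ℝ}
    (hx : 0 ≤ x.2) (i : ι) :
    x.1 i ^ 2 ≤ (1 + |c| / (D ^ 2 - c)) * shiftedQuadric D c x := by
  have hsingle : x.1 i ^ 2 ≤ ∑ j, x.1 j ^ 2 :=
    Finset.single_le_sum (f := fun j => x.1 j ^ 2) (fun j _ => sq_nonneg _) (Finset.mem_univ i)
  linarith [sum_sq_add_sq_le_mul_shiftedQuadric hD hc hx, sq_nonneg (x.2 + D)]

theorem sq_snd_add_le_mul_shiftedQuadric (hD : 0 ≤ D) (hc : c < D ^ 2) {x : (ι → ℝ) × ℝ}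
    (hx : 0 ≤ x.2) :
    (x.2 + D) ^ 2 ≤ (1 + |c| / (D ^ 2 - c)) * shiftedQuadric D c x := by
  have hsum : 0 ≤ ∑ i, x.1 i ^ 2 := Finset.sum_nonneg fun i _ => sq_nonneg _
  linarith [sum_sq_add_sq_le_mul_shiftedQuadric hD hc hx]

theorem tendsto_shiftedQuadric_atTop (hD : 0 ≤ D) (y : ι → ℝ) :
    Tendsto (fun t => shiftedQuadric D c (y, t)) atTop atTop := by
  refine tendsto_atTop_mono' _ ?_
    (tendsto_atTop_add_const_left _ (D ^ 2 - c) (tendsto_pow_atTop two_ne_zero))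
  filter_upwards [eventually_ge_atTop 0] with t ht
  have hnorm : t ^ 2 ≤ ‖(y, t)‖ ^ 2 := by
    rw [← sq_abs]
    gcongr
    exact norm_snd_le (y, t)
  linarith [le_shiftedQuadric (c := c) hD (x := (y, t)) ht]

theorem integrableOn_shiftedQuadric_rpow_neg (hD : 0 ≤ D) (hc : c < D ^ 2)
    (hs : (Fintype.card ι : ℝ) + 1 < 2 * s) :
    IntegrableOn (fun x : (ι → ℝ) × ℝ => shiftedQuadric D c x ^ (-s)) {x | 0 < x.2} := by
  have : (volume : Measure ((ι → ℝ) × ℝ)).IsAddHaarMeasure := by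
    rw [Measure.volume_eq_prod]
    infer_instance
  refine integrableOn_rpow_neg_of_le measurableSet_halfSpace measurable_shiftedQuadric
    (lt_min one_pos (sub_pos.2 hc)) (fun x hx => min_mul_le_shiftedQuadric hD hx.le) ?_
  simpa using hs

theorem integrable_shiftedQuadric_slice_rpow_neg (hD : 0 ≤ D) (hc : c < D ^ 2)
    (hs : (Fintype.card ι : ℝ) < 2 * s) {t : ℝ} (ht : 0 ≤ t) :
    Integrable fun y : ι → ℝ => shiftedQuadric D c (y, t) ^ (-s) := by
  have hmin : 0 < min 1 (D ^ 2 - c) := lt_min one_pos (sub_pos.2 hc)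
  rw [← integrableOn_univ]
  refine integrableOn_rpow_neg_of_le MeasurableSet.univ
    (measurable_shiftedQuadric.comp measurable_prodMk_right) hmin (fun y _ => ?_)
    (by simpa using hs)
  calc min 1 (D ^ 2 - c) * (1 + ‖y‖ ^ 2) ≤ min 1 (D ^ 2 - c) * (1 + ‖(y, t)‖ ^ 2) := by
        gcongr
        exact norm_fst_le (y, t)
    _ ≤ shiftedQuadric D c (y, t) := min_mul_le_shiftedQuadric hD ht

theorem hasFDerivAt_shiftedQuadric (x : (ι → ℝ) × ℝ) :
    HasFDerivAt (shiftedQuadric D c)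
      (∑ i, (2 * x.1 i) • (ContinuousLinearMap.proj i).comp (ContinuousLinearMap.fst ℝ (ι → ℝ) ℝ) +
        (2 * (x.2 + D)) • ContinuousLinearMap.snd ℝ (ι → ℝ) ℝ) x := by
  refine ((HasFDerivAt.fun_sum fun i _ => ?_).add ?_).sub_const c
  · simpa using (((ContinuousLinearMap.proj i).comp
      (ContinuousLinearMap.fst ℝ (ι → ℝ) ℝ)).hasFDerivAt (x := x)).pow 2
  · simpa [mul_add] using (hasFDerivAt_snd.add_const D).pow 2

theorem hasLineDerivAt_shiftedQuadric_single [DecidableEq ι] (x : (ι → ℝ) × ℝ) (i : ι) :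
    HasLineDerivAt ℝ (shiftedQuadric D c) (2 * x.1 i) x (Pi.single i 1, 0) := by
  simpa [Pi.single_apply] using (hasFDerivAt_shiftedQuadric x).hasLineDerivAt (Pi.single i 1, 0)

theorem hasLineDerivAt_shiftedQuadric_normal (x : (ι → ℝ) × ℝ) :
    HasLineDerivAt ℝ (shiftedQuadric D c) (2 * (x.2 + D)) x (0, 1) := by
  simpa using (hasFDerivAt_shiftedQuadric x).hasLineDerivAt (0, 1)

theorem integral_halfSpace_divergence_shiftedQuadric (hD : 0 ≤ D) (hc : c < D ^ 2)
    (hs : (Fintype.card ι : ℝ) + 1 < 2 * s) :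
    ∫ x : (ι → ℝ) × ℝ in {x | 0 < x.2},
      ((∑ i, (shiftedQuadric D c x ^ (-s) -
          2 * s * (x.1 i ^ 2 * shiftedQuadric D c x ^ (-(s + 1))))) +
        (shiftedQuadric D c x ^ (-s) -
          2 * s * ((x.2 + D) ^ 2 * shiftedQuadric D c x ^ (-(s + 1))))) =
    -∫ y : ι → ℝ, D * shiftedQuadric D c (y, 0) ^ (-s) := by
  classical
  have hmeas := measurable_shiftedQuadric (ι := ι) (D := D) (c := c)
  have hpow := integrableOn_shiftedQuadric_rpow_neg hD hc hs
  have hhalf : ∀ᵐ x : (ι → ℝ) × ℝ ∂volume.restrict {x | 0 < x.2}, 0 < x.2 :=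
    ae_restrict_mem measurableSet_halfSpace
  have hpos := hhalf.mono fun x hx => shiftedQuadric_pos hD hc hx.le
  have hslice (i : ι) (t : ℝ) (ht : 0 < t) :
      Integrable fun y : ι → ℝ => y i * shiftedQuadric D c (y, t) ^ (-s) :=
    integrable_mul_rpow_neg (measurable_pi_apply i) (hmeas.comp measurable_prodMk_right)
      (.of_forall fun y => shiftedQuadric_pos hD hc ht.le)
      (.of_forall fun y => sq_fst_le_mul_shiftedQuadric hD hc (x := (y, t)) ht.le i)
      (integrable_shiftedQuadric_slice_rpow_neg hD hc (by linarith) ht.le)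
  have hlim (y : ι → ℝ) :
      Tendsto (fun t => (t + D) * shiftedQuadric D c (y, t) ^ (-s)) atTop (𝓝 0) :=
    tendsto_mul_rpow_neg_zero (by linarith [(Fintype.card ι).cast_nonneg (α := ℝ)])
      (tendsto_shiftedQuadric_atTop hD y) ((eventually_ge_atTop 0).mono fun t ht =>
        sq_snd_add_le_mul_shiftedQuadric hD hc (x := (y, t)) ht)
  simpa only [zero_add] using integral_halfSpace_divergence
    (f := fun i x => x.1 i * shiftedQuadric D c x ^ (-s))
    (g := fun x => (x.2 + D) * shiftedQuadric D c x ^ (-s))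
    hslice
    (fun i => integrable_rpow_neg_sub_sq_mul_rpow_neg (by fun_prop) hmeas hpos
      (hhalf.mono fun x hx => sq_fst_le_mul_shiftedQuadric hD hc hx.le i) hpow)
    (fun i x hx => hasLineDerivAt_mul_rpow_neg (hasLineDerivAt_fst_apply_single x i)
      (hasLineDerivAt_shiftedQuadric_single x i) (shiftedQuadric_pos hD hc hx.le).ne')
    hlim
    (integrable_rpow_neg_sub_sq_mul_rpow_neg (by fun_prop) hmeas hpos
      (hhalf.mono fun x hx => sq_snd_add_le_mul_shiftedQuadric hD hc hx.le) hpow)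
    (fun x hx => hasLineDerivAt_mul_rpow_neg (hasLineDerivAt_snd_add_const x D)
      (hasLineDerivAt_shiftedQuadric_normal x) (shiftedQuadric_pos hD hc hx).ne')

theorem divergence_shiftedQuadric_rpow_neg {x : (ι → ℝ) × ℝ} (hx : shiftedQuadric D c x ≠ 0) :
    (∑ i, (shiftedQuadric D c x ^ (-s) -
        2 * s * (x.1 i ^ 2 * shiftedQuadric D c x ^ (-(s + 1))))) +
      (shiftedQuadric D c x ^ (-s) -
        2 * s * ((x.2 + D) ^ 2 * shiftedQuadric D c x ^ (-(s + 1)))) =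
    (Fintype.card ι + 1 - 2 * s) * shiftedQuadric D c x ^ (-s) -
      2 * s * c * shiftedQuadric D c x ^ (-(s + 1)) := by
  have hsum : ∑ i, x.1 i ^ 2 = shiftedQuadric D c x + c - (x.2 + D) ^ 2 := by
    unfold shiftedQuadric
    ring
  have hpow : shiftedQuadric D c x ^ (-s) =
      shiftedQuadric D c x * shiftedQuadric D c x ^ (-(s + 1)) := by
    rw [neg_add', rpow_sub_one hx, mul_div_cancel₀ _ hx]
  rw [Finset.sum_sub_distrib, ← Finset.mul_sum, ← Finset.sum_mul, Finset.sum_const,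
    Finset.card_univ, nsmul_eq_mul, hsum]
  linear_combination 2 * s * hpow

theorem integral_halfSpace_shiftedQuadric_rpow_neg (hD : 0 ≤ D) (hc : c < D ^ 2)
    (hs : (Fintype.card ι : ℝ) + 1 < 2 * s) :
    (2 * s - Fintype.card ι - 1) *
        (∫ x : (ι → ℝ) × ℝ in {x | 0 < x.2}, shiftedQuadric D c x ^ (-s)) +
      2 * s * c * (∫ x : (ι → ℝ) × ℝ in {x | 0 < x.2}, shiftedQuadric D c x ^ (-(s + 1))) =
    D * ∫ y : ι → ℝ, shiftedQuadric D c (y, 0) ^ (-s) := by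
  have hdiv := integral_halfSpace_divergence_shiftedQuadric hD hc hs
  rw [setIntegral_congr_fun measurableSet_halfSpace fun x hx =>
    divergence_shiftedQuadric_rpow_neg (shiftedQuadric_pos hD hc hx.le).ne'] at hdiv
  have hpow := integrableOn_shiftedQuadric_rpow_neg hD hc hs
  have hpow_succ := integrableOn_shiftedQuadric_rpow_neg (s := s + 1) hD hc (by linarith)
  rw [integral_sub (hpow.const_mul _) (hpow_succ.const_mul _), integral_const_mul,
    integral_const_mul, integral_const_mul] at hdiv
  linear_combination -hdiv

end ShiftedQuadric

section Bubble

variable {n : ℕ} {K D : ℝ}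

theorem QD_eq_shiftedQuadric : QD n D = shiftedQuadric D 1 := rfl

theorem QD_pos (hD : 1 < D) {x : HalfPt n} (hx : 0 ≤ x.2) : 0 < QD n D x := by
  rw [QD_eq_shiftedQuadric]
  exact shiftedQuadric_pos (by linarith) (by nlinarith) hx

theorem natCast_card_fin_pred (hn : 1 ≤ n) : (Fintype.card (Fin (n - 1)) : ℝ) = n - 1 := by
  rw [Fintype.card_fin, Nat.cast_pred hn]

theorem integrableOn_QD_rpow_neg {s : ℝ} (hn : 1 ≤ n) (hD : 1 < D) (hs : n < 2 * s) :
    IntegrableOn (fun x : HalfPt n => QD n D x ^ (-s)) {x | 0 < x.2} := by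
  rw [QD_eq_shiftedQuadric]
  exact integrableOn_shiftedQuadric_rpow_neg (by linarith) (by nlinarith)
    (by rw [natCast_card_fin_pred hn]; linarith)

theorem integral_halfSpace_QD_rpow_neg (hn : 3 ≤ n) (hD : 1 < D) :
    ((n : ℝ) - 2) * (∫ x in {x : HalfPt n | 0 < x.2}, QD n D x ^ (-((n : ℝ) - 1))) +
      2 * ((n : ℝ) - 1) * (∫ x in {x : HalfPt n | 0 < x.2}, QD n D x ^ (-(n : ℝ))) =
    D * ∫ y : Fin (n - 1) → ℝ, QD n D (y, 0) ^ (-((n : ℝ) - 1)) := by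
  have hn' : (3 : ℝ) ≤ n := by exact_mod_cast hn
  have hcard := natCast_card_fin_pred (n := n) (by omega)
  have hmain := integral_halfSpace_shiftedQuadric_rpow_neg (ι := Fin (n - 1)) (D := D) (c := 1)
    (s := (n : ℝ) - 1) (by linarith) (by nlinarith) (by rw [hcard]; linarith)
  rw [hcard, sub_add_cancel] at hmain
  rw [QD_eq_shiftedQuadric]
  linear_combination hmain

/-- The constant factor `αₙ |K|^(-(n-2)/4)` of the bubble, so that
`U = bubbleCoeff n K * QD n D ^ (-(n-2)/2)`. -/
def bubbleCoeff (n : ℕ) (K : ℝ) : ℝ := alphaN n * |K| ^ (-(((n : ℝ) - 2) / 4))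

theorem bubbleCoeff_eq_rpow (hn : 1 ≤ n) :
    bubbleCoeff n K = (4 * (n : ℝ) * ((n : ℝ) - 1) / |K|) ^ (((n : ℝ) - 2) / 4) := by
  have hn' : (0 : ℝ) ≤ n - 1 := sub_nonneg.2 (by exact_mod_cast hn)
  rw [bubbleCoeff, alphaN, div_rpow (by positivity) (abs_nonneg K), rpow_neg (abs_nonneg K),
    ← div_eq_mul_inv]

theorem bubbleCoeff_pos (hn : 2 ≤ n) (hK : K ≠ 0) : 0 < bubbleCoeff n K := by
  have hn' : (0 : ℝ) < n - 1 := sub_pos.2 (by exact_mod_cast hn)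
  rw [bubbleCoeff_eq_rpow (by omega)]
  positivity

theorem bubbleCoeff_rpow_critical (hn : 3 ≤ n) (hK : K ≠ 0) :
    bubbleCoeff n K ^ (2 * (n : ℝ) / ((n : ℝ) - 2)) =
      bubbleCoeff n K ^ 2 * (4 * (n : ℝ) * ((n : ℝ) - 1) / |K|) := by
  have hn' : (3 : ℝ) ≤ n := by exact_mod_cast hn
  have hn2 : (n : ℝ) - 2 ≠ 0 := by linarith
  have hbase : 0 ≤ 4 * (n : ℝ) * ((n : ℝ) - 1) / |K| :=
    div_nonneg (mul_nonneg (by positivity) (by linarith)) (abs_nonneg K)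
  have hsplit : 2 * (n : ℝ) / ((n : ℝ) - 2) = 2 + 4 / ((n : ℝ) - 2) := by field_simp; ring
  have hexp : ((n : ℝ) - 2) / 4 * (4 / ((n : ℝ) - 2)) = 1 := by field_simp
  rw [hsplit, rpow_add (bubbleCoeff_pos (by omega) hK), rpow_two]
  congr 1
  rw [bubbleCoeff_eq_rpow (by omega), ← rpow_mul hbase, hexp, rpow_one]

theorem bubbleCoeff_rpow_trace (hn : 3 ≤ n) (hK : K ≠ 0) :
    bubbleCoeff n K ^ (2 * ((n : ℝ) - 1) / ((n : ℝ) - 2)) =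
      bubbleCoeff n K ^ 2 * √(4 * (n : ℝ) * ((n : ℝ) - 1) / |K|) := by
  have hn' : (3 : ℝ) ≤ n := by exact_mod_cast hn
  have hn2 : (n : ℝ) - 2 ≠ 0 := by linarith
  have hbase : 0 ≤ 4 * (n : ℝ) * ((n : ℝ) - 1) / |K| :=
    div_nonneg (mul_nonneg (by positivity) (by linarith)) (abs_nonneg K)
  have hsplit : 2 * ((n : ℝ) - 1) / ((n : ℝ) - 2) = 2 + 2 / ((n : ℝ) - 2) := by field_simp; ring
  have hexp : ((n : ℝ) - 2) / 4 * (2 / ((n : ℝ) - 2)) = 1 / 2 := by field_simp; norm_num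
  rw [hsplit, rpow_add (bubbleCoeff_pos (by omega) hK), rpow_two]
  congr 1
  rw [bubbleCoeff_eq_rpow (by omega), ← rpow_mul hbase, hexp, ← sqrt_eq_rpow]

theorem bubbleU_rpow (hn : 2 ≤ n) (hK : K ≠ 0) {x : HalfPt n} (hx : 0 ≤ QD n D x) (p : ℝ) :
    bubbleU n K D x ^ p = bubbleCoeff n K ^ p * QD n D x ^ (-(((n : ℝ) - 2) / 2) * p) := by
  rw [bubbleU, ← bubbleCoeff, mul_rpow (bubbleCoeff_pos hn hK).le (by positivity), ← rpow_mul hx]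

theorem gradSq_comp {φ : ℝ → ℝ} {φ' : ℝ} {f : HalfPt n → ℝ} {x : HalfPt n}
    (hφ : HasDerivAt φ φ' (f x)) (hf : DifferentiableAt ℝ f x) :
    gradSq n (fun x => φ (f x)) x = φ' ^ 2 * gradSq n f x := by
  have hfderiv : fderiv ℝ (fun x => φ (f x)) x = φ' • fderiv ℝ f x :=
    (hφ.comp_hasFDerivAt x hf.hasFDerivAt).fderiv
  simp only [gradSq, hfderiv, smul_apply, smul_eq_mul, mul_pow, ← Finset.mul_sum, ← mul_add]

theorem gradSq_QD (x : HalfPt n) : gradSq n (QD n D) x = 4 * (QD n D x + 1) := by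
  have hdiff : DifferentiableAt ℝ (QD n D) x := (hasFDerivAt_shiftedQuadric x).differentiableAt
  have htangential (i : Fin (n - 1)) : fderiv ℝ (QD n D) x (Pi.single i 1, 0) = 2 * x.1 i := by
    rw [← hdiff.lineDeriv_eq_fderiv]
    exact (hasLineDerivAt_shiftedQuadric_single x i).lineDeriv
  have hnormal : fderiv ℝ (QD n D) x (0, 1) = 2 * (x.2 + D) := by
    rw [← hdiff.lineDeriv_eq_fderiv]
    exact (hasLineDerivAt_shiftedQuadric_normal x).lineDeriv
  simp only [gradSq, htangential, hnormal, mul_pow, ← Finset.mul_sum]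
  unfold QD
  ring

theorem gradSq_bubbleU {x : HalfPt n} (hx : 0 < QD n D x) :
    gradSq n (bubbleU n K D) x = ((n : ℝ) - 2) ^ 2 * bubbleCoeff n K ^ 2 *
      (QD n D x ^ (-((n : ℝ) - 1)) + QD n D x ^ (-(n : ℝ))) := by
  have hdiff : DifferentiableAt ℝ (QD n D) x := (hasFDerivAt_shiftedQuadric x).differentiableAt
  have hderiv := (hasDerivAt_rpow_const (p := -(((n : ℝ) - 2) / 2)) (Or.inl hx.ne')).const_mul
    (bubbleCoeff n K)
  have hsq : (QD n D x ^ (-(((n : ℝ) - 2) / 2) - 1)) ^ 2 = QD n D x ^ (-(n : ℝ)) := by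
    rw [← rpow_mul_natCast hx.le]
    congr 1
    push_cast
    ring
  have hsucc : QD n D x ^ (-((n : ℝ) - 1)) = QD n D x * QD n D x ^ (-(n : ℝ)) := by
    rw [neg_sub', sub_neg_eq_add, rpow_add_one hx.ne', mul_comm]
  calc gradSq n (bubbleU n K D) x
      = (bubbleCoeff n K * (-(((n : ℝ) - 2) / 2) * QD n D x ^ (-(((n : ℝ) - 2) / 2) - 1))) ^ 2 *
          (4 * (QD n D x + 1)) := by rw [← gradSq_QD, ← gradSq_comp hderiv hdiff]; rfl
    _ = _ := by
      rw [mul_pow, mul_pow, hsq, hsucc]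
      ring

theorem integral_gradSq_bubbleU (hn : 3 ≤ n) (hD : 1 < D) :
    ∫ x in {x : HalfPt n | 0 < x.2}, gradSq n (bubbleU n K D) x =
      ((n : ℝ) - 2) ^ 2 * bubbleCoeff n K ^ 2 *
        ((∫ x in {x : HalfPt n | 0 < x.2}, QD n D x ^ (-((n : ℝ) - 1))) +
          ∫ x in {x : HalfPt n | 0 < x.2}, QD n D x ^ (-(n : ℝ))) := by
  have hn' : (3 : ℝ) ≤ n := by exact_mod_cast hn
  rw [setIntegral_congr_fun measurableSet_halfSpace fun x hx => gradSq_bubbleU (QD_pos hD hx.le),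
    integral_const_mul, integral_add
      (integrableOn_QD_rpow_neg (by omega) hD (by linarith))
      (integrableOn_QD_rpow_neg (by omega) hD (by linarith))]

theorem integral_bubbleU_rpow_critical (hn : 3 ≤ n) (hK : K ≠ 0) (hD : 1 < D) :
    ∫ x in {x : HalfPt n | 0 < x.2}, bubbleU n K D x ^ (2 * (n : ℝ) / ((n : ℝ) - 2)) =
      bubbleCoeff n K ^ 2 * (4 * (n : ℝ) * ((n : ℝ) - 1) / |K|) *
        ∫ x in {x : HalfPt n | 0 < x.2}, QD n D x ^ (-(n : ℝ)) := by
  have hn' : (3 : ℝ) ≤ n := by exact_mod_cast hn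
  have hn2 : (n : ℝ) - 2 ≠ 0 := by linarith
  have hexp : -(((n : ℝ) - 2) / 2) * (2 * (n : ℝ) / ((n : ℝ) - 2)) = -(n : ℝ) := by field_simp
  rw [← integral_const_mul]
  refine setIntegral_congr_fun measurableSet_halfSpace fun x hx => ?_
  rw [bubbleU_rpow (by omega) hK (QD_pos hD hx.le).le, bubbleCoeff_rpow_critical hn hK, hexp]

theorem integral_bubbleU_rpow_trace (hn : 3 ≤ n) (hK : K ≠ 0) (hD : 1 < D) :
    ∫ y : Fin (n - 1) → ℝ, bubbleU n K D (y, 0) ^ (2 * ((n : ℝ) - 1) / ((n : ℝ) - 2)) =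
      bubbleCoeff n K ^ 2 * √(4 * (n : ℝ) * ((n : ℝ) - 1) / |K|) *
        ∫ y : Fin (n - 1) → ℝ, QD n D (y, 0) ^ (-((n : ℝ) - 1)) := by
  have hn' : (3 : ℝ) ≤ n := by exact_mod_cast hn
  have hn2 : (n : ℝ) - 2 ≠ 0 := by linarith
  have hexp : -(((n : ℝ) - 2) / 2) * (2 * ((n : ℝ) - 1) / ((n : ℝ) - 2)) = -((n : ℝ) - 1) := by
    field_simp
  rw [← integral_const_mul]
  congr 1 with y
  rw [bubbleU_rpow (by omega) hK (QD_pos hD le_rfl).le, bubbleCoeff_rpow_trace hn hK, hexp]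

end Bubble

theorem bubble_integration_by_parts_general
    (n : ℕ) (hn : 3 ≤ n) (K H D : ℝ)
    (hD : D = Real.sqrt ((n : ℝ) * ((n : ℝ) - 1)) * H / Real.sqrt |K|) (hD1 : 1 < D) :
    cN n / 2 * (∫ x in {x : HalfPt n | 0 < x.2}, gradSq n (bubbleU n K D) x)
      = cN n * ((n : ℝ) - 2) / 4 * H *
            (∫ y : Fin (n - 1) → ℝ, bubbleU n K D (y, 0) ^ (2 * ((n : ℝ) - 1) / ((n : ℝ) - 2)))
          - 1 / 2 * |K| *
            (∫ x in {x : HalfPt n | 0 < x.2}, bubbleU n K D x ^ (2 * (n : ℝ) / ((n : ℝ) - 2))) := by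
  have hn' : (3 : ℝ) ≤ n := by exact_mod_cast hn
  have hn2 : (n : ℝ) - 2 ≠ 0 := by linarith
  have hK : K ≠ 0 := by
    rintro rfl
    norm_num [hD] at hD1
  have htrace : √(4 * (n : ℝ) * ((n : ℝ) - 1) / |K|) * H = 2 * D := by
    rw [sqrt_div' _ (abs_nonneg K), mul_assoc 4, sqrt_mul (by norm_num),
      show (4 : ℝ) = 2 ^ 2 by norm_num, sqrt_sq (by norm_num), hD]
    ring
  rw [integral_gradSq_bubbleU hn hD1, integral_bubbleU_rpow_trace hn hK hD1,
    integral_bubbleU_rpow_critical hn hK hD1]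
  have hflux := integral_halfSpace_QD_rpow_neg hn hD1
  set boundary := ∫ y : Fin (n - 1) → ℝ, QD n D (y, 0) ^ (-((n : ℝ) - 1))
  generalize √(4 * (n : ℝ) * ((n : ℝ) - 1) / |K|) = r at htrace ⊢
  have habs : |K| ≠ 0 := abs_ne_zero.2 hK
  unfold cN
  field_simp
  linear_combination 4 * ((n : ℝ) - 1) * bubbleCoeff n K ^ 2 * hflux -
    2 * ((n : ℝ) - 1) * bubbleCoeff n K ^ 2 * boundary * htrace

theorem bubble_integration_by_parts
    (n : ℕ) (hn : 4 ≤ n) (K H D : ℝ) (hK : K < 0) (hH : 0 < H)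
    (hD : D = Real.sqrt ((n : ℝ) * ((n : ℝ) - 1)) * H / Real.sqrt |K|) (hD1 : 1 < D) :
    cN n / 2 * (∫ x in {x : HalfPt n | 0 < x.2}, gradSq n (bubbleU n K D) x)
      = cN n * ((n : ℝ) - 2) / 4 * H *
            (∫ y : Fin (n - 1) → ℝ, bubbleU n K D (y, 0) ^ (2 * ((n : ℝ) - 1) / ((n : ℝ) - 2)))
          - 1 / 2 * |K| *
            (∫ x in {x : HalfPt n | 0 < x.2}, bubbleU n K D x ^ (2 * (n : ℝ) / ((n : ℝ) - 2))) :=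
  bubble_integration_by_parts_general n (by omega) K H D hD hD1
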